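/- Faithfulness of the Hecke algebra action for m ≥ N: if m ≥ N, then the K-subalgebra of End_K(V^{⊗N}) generated by the Hecke operators R_i := Id^{⊗(i−1)} ⊗ R ⊗ Id^{⊗(N−i−1)} (1 ≤ i ≤ N−1) has dimension N! over K. (This is the paper's claim that for m ≥ N the Schur–Weyl map ℋ_N → End_{U_q(gl_m)}(V^{⊗N}) is an isomorphism, combined with dim ℋ_N = N!.) -/

import Mathlib

set_option synthInstance.maxHeartbeats 400000
set_option maxHeartbeats 1000000

noncomputable section

/-- The base field `K = ℚ(q)`. -/
abbrev K : Type := RatFunc ℚ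

/-- The variable `q`. -/
def q : K := RatFunc.X

/-- The elementary matrix `E_i` (0-based: single `1` in position `(i, i+1)`). -/
def Emat (M : ℕ) (i : ℕ) : Matrix (Fin M) (Fin M) K :=
  fun a b => if (a : ℕ) = i ∧ (b : ℕ) = i + 1 then 1 else 0

/-- The elementary matrix `F_i` (0-based: single `1` in position `(i+1, i)`). -/
def Fmat (M : ℕ) (i : ℕ) : Matrix (Fin M) (Fin M) K :=
  fun a b => if (a : ℕ) = i + 1 ∧ (b : ℕ) = i then 1 else 0

/-- The diagonal matrix `L_j` with entry `q` in (0-based) position `j` and `1`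
elsewhere. -/
def Lmat (M : ℕ) (j : ℕ) : Matrix (Fin M) (Fin M) K :=
  Matrix.diagonal (fun t => if (t : ℕ) = j then q else 1)

/-- The inverse `L_j⁻¹` of `Lmat`. -/
def LmatInv (M : ℕ) (j : ℕ) : Matrix (Fin M) (Fin M) K :=
  Matrix.diagonal (fun t => if (t : ℕ) = j then q⁻¹ else 1)

/-- The diagonal matrix `K_i = L_i L_{i+1}⁻¹` with entries `q` at position `i`
and `q⁻¹` at position `i+1` (0-based). -/
def Kmat (M : ℕ) (i : ℕ) : Matrix (Fin M) (Fin M) K :=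
  Matrix.diagonal
    (fun t => if (t : ℕ) = i then q else if (t : ℕ) = i + 1 then q⁻¹ else 1)

/-- The inverse `K_i⁻¹` of `Kmat`. -/
def KmatInv (M : ℕ) (i : ℕ) : Matrix (Fin M) (Fin M) K :=
  Matrix.diagonal
    (fun t => if (t : ℕ) = i then q⁻¹ else if (t : ℕ) = i + 1 then q else 1)

/-- The Kronecker product of two `M × M` matrices, acting on `V ⊗ V` with
`V = K^M`: `(A ⊗ B)(eᵢ ⊗ eⱼ) = (A eᵢ) ⊗ (B eⱼ)`. -/
def kron2 {M : ℕ} (A B : Matrix (Fin M) (Fin M) K) :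
    Matrix (Fin M × Fin M) (Fin M × Fin M) K :=
  fun p r => A p.1 r.1 * B p.2 r.2

/-- The matrix (in the standard basis of `V ⊗ V`, `V = K^m`, indices 0-based) of
the `n = 0` R-matrix: `R(eᵢ ⊗ eᵢ) = q⁻¹ eᵢ ⊗ eᵢ`, `R(eᵢ ⊗ eⱼ) = eⱼ ⊗ eᵢ` for
`i < j`, and `R(eᵢ ⊗ eⱼ) = eⱼ ⊗ eᵢ + (q⁻¹ - q) eᵢ ⊗ eⱼ` for `i > j`. -/
def R0mat (m : ℕ) : Matrix (Fin m × Fin m) (Fin m × Fin m) K :=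
  fun p r =>
    if r.1 = r.2 then (if p = r then q⁻¹ else 0)
    else (if p.1 = r.2 ∧ p.2 = r.1 then 1 else 0)
      + (if r.2 < r.1 ∧ p = r then q⁻¹ - q else 0)

/-- The Hecke operator `R_i = Id^{⊗i} ⊗ R ⊗ Id^{⊗(N-i-2)}` on `V^{⊗N}`
(0-based: it acts by the R-matrix on tensor factors `i` and `i+1` and by the
identity elsewhere). -/
def Rop0 (m N : ℕ) (i : ℕ) (h : i + 1 < N) :
    Matrix (Fin N → Fin m) (Fin N → Fin m) K :=
  fun f g =>
    R0mat m (f ⟨i, Nat.lt_of_succ_lt h⟩, f ⟨i + 1, h⟩)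
        (g ⟨i, Nat.lt_of_succ_lt h⟩, g ⟨i + 1, h⟩) *
      ∏ t : Fin N, (if (t : ℕ) = i ∨ (t : ℕ) = i + 1 then 1
        else if f t = g t then 1 else 0)

/-- The operator `B^{⊗(k-1)} ⊗ A ⊗ C^{⊗(N-k)}` on `V^{⊗N}`: `B` on tensor
factors before position `k`, `A` at `k`, and `C` after `k`. -/
def place (m N : ℕ) (B A C : Matrix (Fin m) (Fin m) K) (k : Fin N) :
    Matrix (Fin N → Fin m) (Fin N → Fin m) K :=
  fun f g => ∏ t : Fin N,
    (if t < k then B (f t) (g t)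
     else if t = k then A (f t) (g t) else C (f t) (g t))

/-- The Kronecker power `A^{⊗N}` acting on `V^{⊗N}`. -/
def kpow (m N : ℕ) (A : Matrix (Fin m) (Fin m) K) :
    Matrix (Fin N → Fin m) (Fin N → Fin m) K :=
  fun f g => ∏ t : Fin N, A (f t) (g t)

/-- The iterated coproduct operator
`Δ^{(N)}(E_j) = ∑ₖ Id^{⊗(k-1)} ⊗ E_j ⊗ (K_j⁻¹)^{⊗(N-k)}` on `V^{⊗N}`. -/
def DeltaEN (m N j : ℕ) : Matrix (Fin N → Fin m) (Fin N → Fin m) K :=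
  ∑ k : Fin N, place m N 1 (Emat m j) (KmatInv m j) k

/-- The iterated coproduct operator
`Δ^{(N)}(F_j) = ∑ₖ K_j^{⊗(k-1)} ⊗ F_j ⊗ Id^{⊗(N-k)}` on `V^{⊗N}`. -/
def DeltaFN (m N j : ℕ) : Matrix (Fin N → Fin m) (Fin N → Fin m) K :=
  ∑ k : Fin N, place m N (Kmat m j) (Fmat m j) 1 k

/-- The generating set of the Hecke side: the operators `R_i` (`1 ≤ i ≤ N-1`,
here 0-based `i + 1 < N`) on `V^{⊗N}`. -/
def HeckeGens (m N : ℕ) : Set (Matrix (Fin N → Fin m) (Fin N → Fin m) K) :=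
  { X | ∃ (i : ℕ) (h : i + 1 < N), X = Rop0 m N i h }

/-!
Let the Hecke generators act on the free module with basis the permutations of `N` letters by
exchanging neighbouring positions. These operators commute with the ones exchanging neighbouring
values, and both families generate the whole module from the identity permutation. Hence an element
of the free algebra on the generators acts by zero on this regular module as soon as it kills the
identity, and the algebra of operators has dimension `N!`.

After rescaling the basis vector of a word `f` by `q ^ inv f`, substituting a monotone word `g` into
permutations intertwines the regular module with `V^{⊗N}`. Every word is a permutation of a monotone
one, so what acts by zero on the regular module does so on `V^{⊗N}`; the converse holds because the
substitution is injective for a strictly monotone `g`, which exists when `N ≤ m`.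
-/

namespace HeckeAction

open Equiv Finsupp
open scoped Matrix

section Swap

lemma eq_iff_eq_and_eq_and_forall_ne {ι α : Type*} {f g : ι → α} (a b : ι) :
    f = g ↔ f a = g a ∧ f b = g b ∧ ∀ j, j ≠ a → j ≠ b → f j = g j := by
  refine ⟨by rintro rfl; simp, fun ⟨ha, hb, hne⟩ ↦ funext fun j ↦ ?_⟩
  by_cases hja : j = a
  · rwa [hja]
  by_cases hjb : j = b
  · rwa [hjb]
  exact hne j hja hjb

section DecidableEq

variable {ι α : Type*} [DecidableEq ι]

lemma eq_and_eq_or_eq_and_eq_of_swap_eq_swap {x y c d : ι} (hcd : c ≠ d)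
    (h : swap x y = swap c d) : x = c ∧ y = d ∨ x = d ∧ y = c := by
  have hc : swap x y c = d := by rw [h, swap_apply_left]
  grind

lemma eq_comp_swap_iff {f g : ι → α} (a b : ι) :
    f = g ∘ swap a b ↔ f a = g b ∧ f b = g a ∧ ∀ j, j ≠ a → j ≠ b → f j = g j := by
  rw [eq_iff_eq_and_eq_and_forall_ne a b]
  simp +contextual [swap_apply_of_ne_of_ne]

lemma comp_swap_eq_self {f : ι → α} {a b : ι} (h : f a = f b) : f ∘ swap a b = f :=
  ((eq_comp_swap_iff a b).mpr ⟨h, h.symm, fun _ _ _ ↦ rfl⟩).symm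

end DecidableEq

variable {ι : Type*} [LinearOrder ι] {a b : ι}

lemma swap_lt_swap_iff (hab : a ⋖ b) {x y : ι} (hxy : swap x y ≠ swap a b) :
    swap a b x < swap a b y ↔ x < y := by
  have not_between (z : ι) : z ≤ a ∨ b ≤ z := by
    simpa only [not_lt] using not_and_or.mp fun hz ↦ hab.2 hz.1 hz.2
  have hlt := hab.lt
  have hx := not_between x
  have hy := not_between y
  have hba : swap b a = swap a b := swap_comm b a
  simp only [swap_apply_def]
  grind

lemma apply_lt_apply_iff_inv_apply_lt_inv_apply {c d : ι} (hab : a < b) (hcd : c < d)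
    {w : Perm ι} (hw : swap (w a) (w b) = swap c d) : w a < w b ↔ w⁻¹ c < w⁻¹ d := by
  rcases eq_and_eq_or_eq_and_eq_of_swap_eq_swap hcd.ne hw with ⟨rfl, rfl⟩ | ⟨rfl, rfl⟩
  · simp [hab, hcd]
  · simp [hab.not_gt, hcd.not_gt]

end Swap

section LinearAlgebra

variable {R : Type*}

lemma eq_top_of_single_one_mem [Semiring R] {G : Type*} {S : Submodule R (G →₀ R)}
    (h : ∀ w, single w 1 ∈ S) : S = ⊤ := by
  rw [← top_le_iff, ← (Finsupp.basisSingleOne (R := R) (ι := G)).span_eq, Submodule.span_le]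
  rintro _ ⟨w, rfl⟩
  simpa using h w

lemma finrank_range_eq_of_ker_eq [Ring R] {E M M' : Type*} [AddCommGroup E] [Module R E]
    [AddCommGroup M] [Module R M] [AddCommGroup M'] [Module R M']
    {f : E →ₗ[R] M} {g : E →ₗ[R] M'} (h : LinearMap.ker f = LinearMap.ker g) :
    Module.finrank R (LinearMap.range f) = Module.finrank R (LinearMap.range g) :=
  (f.quotKerEquivRange.symm ≪≫ₗ Submodule.quotEquivOfEq _ _ h ≪≫ₗ
    g.quotKerEquivRange).finrank_eq

end LinearAlgebra

section Inversions

variable {ι α : Type*} [LinearOrder ι] [Fintype ι] [LinearOrder α]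

/-- The inversions of a word `f`, as pairs of positions. -/
def inversions (f : ι → α) : Finset (ι × ι) :=
  {p | p.1 < p.2 ∧ f p.2 < f p.1}

lemma mem_inversions {f : ι → α} {p : ι × ι} :
    p ∈ inversions f ↔ p.1 < p.2 ∧ f p.2 < f p.1 := by
  simp [inversions]

lemma inversions_comp_swap {a b : ι} (hab : a ⋖ b) {f : ι → α} (hf : f a < f b) :
    inversions (f ∘ swap a b) = insert (a, b)
      ((inversions f).map ((swap a b).prodCongr (swap a b)).toEmbedding) := by
  ext ⟨x, y⟩
  rw [Finset.mem_insert, Finset.mem_map_equiv]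
  simp only [mem_inversions, prodCongr_symm, symm_swap, prodCongr_apply, Prod.map_apply,
    Function.comp_apply, Prod.mk.injEq]
  by_cases hxy : swap x y = swap a b
  · rcases eq_and_eq_or_eq_and_eq_of_swap_eq_swap hab.ne hxy with ⟨rfl, rfl⟩ | ⟨rfl, rfl⟩
    · simp [hab.lt, hf]
    · simp [hab.lt.not_gt, hf.not_gt, hab.ne']
  · rw [swap_lt_swap_iff hab hxy]
    have : ¬ (x = a ∧ y = b) := by rintro ⟨rfl, rfl⟩; exact hxy rfl
    simp only [this, false_or]

lemma card_inversions_comp_swap {a b : ι} (hab : a ⋖ b) {f : ι → α} (hf : f a < f b) :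
    (inversions (f ∘ swap a b)).card = (inversions f).card + 1 := by
  rw [inversions_comp_swap hab hf, Finset.card_insert_of_notMem, Finset.card_map]
  simp [Finset.mem_map_equiv, mem_inversions, hab.lt.not_gt]

end Inversions

section HeckeStep

variable {F M : Type*} [Field F] [AddCommGroup M] [Module F M] (t : F)
  (p r : Prop) [Decidable p] [Decidable r]

/-- The image of a basis vector `y` under a Hecke generator: `x` is the basis vector with two
neighbouring entries exchanged, and `p` says that these entries of `y` are in increasing order. In
this normalization a generator acts on an ascent by `t⁻¹ • x`, and it satisfies
`(T - t⁻¹) (T + t) = 0`. -/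
def heckeStep (x y : M) : M :=
  if p then t⁻¹ • x else t • x + (t⁻¹ - t) • y

lemma map_heckeStep {M' : Type*} [AddCommGroup M'] [Module F M'] (φ : M →ₗ[F] M') (x y : M) :
    φ (heckeStep t p x y) = heckeStep t p (φ x) (φ y) := by
  simp [heckeStep, apply_ite φ]

lemma heckeStep_comm (x y z u : M) :
    heckeStep t p (heckeStep t r x y) (heckeStep t r z u) =
      heckeStep t r (heckeStep t p x z) (heckeStep t p y u) := by
  unfold heckeStep
  split_ifs <;> module

lemma heckeStep_self (x : M) : heckeStep t p x x = t⁻¹ • x := by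
  unfold heckeStep
  split_ifs <;> module

variable {t p} in
lemma mem_of_heckeStep_mem (ht : t ≠ 0) {S : Submodule F M} {x y : M} (hy : y ∈ S)
    (h : heckeStep t p x y ∈ S) : x ∈ S := by
  unfold heckeStep at h
  split_ifs at h
  · exact (S.smul_mem_iff (inv_ne_zero ht)).mp h
  · exact (S.smul_mem_iff ht).mp ((S.add_mem_iff_left (S.smul_mem _ hy)).mp h)

end HeckeStep

section Regular

variable {F ι : Type*} [Field F] [LinearOrder ι] (t : F) (a b c d : ι)

/-- The generator of the regular representation of the Hecke algebra which exchanges the entries of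
`w` at the positions `a` and `b`. With `T_w` the standard basis, `single w 1` stands for
`t ^ ℓ(w) • T_w`. -/
def positionHecke : (Perm ι →₀ F) →ₗ[F] (Perm ι →₀ F) :=
  linearCombination F fun w ↦
    heckeStep t (w a < w b) (single (w * swap a b) 1) (single w 1)

/-- The generator of the opposite regular representation of the Hecke algebra, which exchanges the
values `c` and `d` of `w`; same basis as in `positionHecke`. -/
def valueHecke : (Perm ι →₀ F) →ₗ[F] (Perm ι →₀ F) :=
  linearCombination F fun w ↦
    heckeStep t (w⁻¹ c < w⁻¹ d) (single (swap c d * w) 1) (single w 1)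

lemma positionHecke_single (w : Perm ι) :
    positionHecke t a b (single w 1) =
      heckeStep t (w a < w b) (single (w * swap a b) 1) (single w 1) := by
  rw [positionHecke, linearCombination_single, one_smul]

lemma valueHecke_single (w : Perm ι) :
    valueHecke t c d (single w 1) =
      heckeStep t (w⁻¹ c < w⁻¹ d) (single (swap c d * w) 1) (single w 1) := by
  rw [valueHecke, linearCombination_single, one_smul]

variable {a b c d}

lemma positionHecke_single_eq_valueHecke_single (hab : a < b) (hcd : c < d) {w : Perm ι}
    (hw : swap (w a) (w b) = swap c d) :
    positionHecke t a b (single w 1) = valueHecke t c d (single w 1) := by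
  rw [positionHecke_single, valueHecke_single, mul_swap_eq_swap_mul, hw]
  simp only [apply_lt_apply_iff_inv_apply_lt_inv_apply hab hcd hw]

theorem commute_positionHecke_valueHecke (hab : a ⋖ b) (hcd : c ⋖ d) :
    Commute (positionHecke t a b) (valueHecke t c d) := by
  refine Finsupp.lhom_ext' fun w ↦ LinearMap.ext_ring ?_
  change positionHecke t a b (valueHecke t c d (single w 1)) =
    valueHecke t c d (positionHecke t a b (single w 1))
  by_cases hw : swap (w a) (w b) = swap c d
  -- Both operators preserve the span of `w` and `w * swap a b`, and they agree on it.
  · have hws : swap ((w * swap a b) a) ((w * swap a b) b) = swap c d := by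
      simp only [Perm.mul_apply, swap_apply_left, swap_apply_right, swap_comm (w b), hw]
    rw [← positionHecke_single_eq_valueHecke_single t hab.lt hcd.lt hw, positionHecke_single,
      map_heckeStep, map_heckeStep,
      positionHecke_single_eq_valueHecke_single t hab.lt hcd.lt hw,
      positionHecke_single_eq_valueHecke_single t hab.lt hcd.lt hws]
  · have hw' : swap (w⁻¹ c) (w⁻¹ d) ≠ swap a b := by
      refine fun h ↦ hw ?_
      rw [swap_apply_apply, ← h, swap_apply_apply]
      group
    simp only [positionHecke_single, valueHecke_single, map_heckeStep, Perm.mul_apply, mul_inv_rev,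
      swap_inv, swap_lt_swap_iff hcd hw, swap_lt_swap_iff hab hw', mul_assoc]
    rw [heckeStep_comm]

end Regular

section Cyclic

variable {F : Type*} [Field F] {t : F} {n : ℕ}

lemma castSucc_covBy_succ (i : Fin n) : i.castSucc ⋖ i.succ := by
  simp [Fin.covBy_iff]

lemma mem_mclosure_adjacent_swaps (w : Perm (Fin (n + 1))) :
    w ∈ Submonoid.closure (Set.range fun i : Fin n ↦ swap i.castSucc i.succ) := by
  rw [Perm.mclosure_swap_castSucc_succ]
  exact Submonoid.mem_top w

lemma eq_top_of_positionHecke_mem (ht : t ≠ 0) {S : Submodule F (Perm (Fin (n + 1)) →₀ F)}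
    (one_mem : single 1 1 ∈ S)
    (step_mem : ∀ (i : Fin n), ∀ u ∈ S, positionHecke t i.castSucc i.succ u ∈ S) : S = ⊤ := by
  refine eq_top_of_single_one_mem fun w ↦ ?_
  induction mem_mclosure_adjacent_swaps w using Submonoid.closure_induction_right with
  | one => exact one_mem
  | mul_right w _ _ hs hw =>
    obtain ⟨i, rfl⟩ := hs
    have h := step_mem i _ hw
    rw [positionHecke_single] at h
    exact mem_of_heckeStep_mem ht hw h

lemma eq_top_of_valueHecke_mem (ht : t ≠ 0) {S : Submodule F (Perm (Fin (n + 1)) →₀ F)}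
    (one_mem : single 1 1 ∈ S)
    (step_mem : ∀ (i : Fin n), ∀ u ∈ S, valueHecke t i.castSucc i.succ u ∈ S) : S = ⊤ := by
  refine eq_top_of_single_one_mem fun w ↦ ?_
  induction mem_mclosure_adjacent_swaps w using Submonoid.closure_induction_left with
  | one => exact one_mem
  | mul_left _ hs w _ hw =>
    obtain ⟨i, rfl⟩ := hs
    have h := step_mem i _ hw
    rw [valueHecke_single] at h
    exact mem_of_heckeStep_mem ht hw h

variable (t n) in
/-- The regular representation of the Hecke algebra of `Perm (Fin (n + 1))`, as a representation of
the free algebra on its generators. -/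
def regularRep : FreeAlgebra F (Fin n) →ₐ[F] Module.End F (Perm (Fin (n + 1)) →₀ F) :=
  FreeAlgebra.lift F fun i ↦ positionHecke t i.castSucc i.succ

lemma regularRep_ι (i : Fin n) :
    regularRep t n (FreeAlgebra.ι F i) = positionHecke t i.castSucc i.succ :=
  FreeAlgebra.lift_ι_apply _ _

lemma commute_regularRep_valueHecke (x : FreeAlgebra F (Fin n)) (j : Fin n) :
    Commute (regularRep t n x) (valueHecke t j.castSucc j.succ) := by
  induction x using FreeAlgebra.induction with
  | grade0 r => rw [AlgHom.commutes]; exact Algebra.commute_algebraMap_left r _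
  | grade1 i =>
    rw [regularRep_ι]
    exact commute_positionHecke_valueHecke t (castSucc_covBy_succ i) (castSucc_covBy_succ j)
  | mul x y hx hy => rw [map_mul]; exact hx.mul_left hy
  | add x y hx hy => rw [map_add]; exact hx.add_left hy

variable (t n) in
/-- The action of the free algebra on the identity permutation in `regularRep`. -/
def regularOrbitMap : FreeAlgebra F (Fin n) →ₗ[F] (Perm (Fin (n + 1)) →₀ F) :=
  LinearMap.applyₗ (single 1 1) ∘ₗ (regularRep t n).toLinearMap

lemma regularOrbitMap_apply (x : FreeAlgebra F (Fin n)) :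
    regularOrbitMap t n x = regularRep t n x (single 1 1) :=
  rfl

lemma ker_regularOrbitMap (ht : t ≠ 0) :
    LinearMap.ker (regularOrbitMap t n) = LinearMap.ker (regularRep t n).toLinearMap := by
  ext x
  simp only [LinearMap.mem_ker, regularOrbitMap_apply, AlgHom.toLinearMap_apply]
  refine ⟨fun hx ↦ ?_, fun hx ↦ by rw [hx, LinearMap.zero_apply]⟩
  refine LinearMap.ker_eq_top.mp (eq_top_of_valueHecke_mem ht hx fun j u hu ↦ ?_)
  rw [LinearMap.mem_ker] at hu ⊢
  rw [← Module.End.mul_apply, (commute_regularRep_valueHecke x j).eq, Module.End.mul_apply, hu,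
    map_zero]

lemma range_regularOrbitMap (ht : t ≠ 0) : LinearMap.range (regularOrbitMap t n) = ⊤ := by
  refine eq_top_of_positionHecke_mem ht ⟨1, by simp [regularOrbitMap_apply]⟩ ?_
  rintro i _ ⟨x, rfl⟩
  refine ⟨FreeAlgebra.ι F i * x, ?_⟩
  rw [regularOrbitMap_apply, map_mul, regularRep_ι, Module.End.mul_apply, regularOrbitMap_apply]

end Cyclic

section Tensor

variable {m n : ℕ}

/-- The Hecke operator `Rop0`, indexed by `Fin n` when there are `n + 1` tensor factors. -/
abbrev tensorHecke (m : ℕ) {n : ℕ} (i : Fin n) :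
    Matrix (Fin (n + 1) → Fin m) (Fin (n + 1) → Fin m) K :=
  Rop0 m (n + 1) i (Nat.succ_lt_succ i.isLt)

lemma heckeGens_succ (m n : ℕ) : HeckeGens m (n + 1) = Set.range (tensorHecke m (n := n)) := by
  ext X
  constructor
  · rintro ⟨i, h, rfl⟩
    exact ⟨⟨i, Nat.lt_of_succ_lt_succ h⟩, rfl⟩
  · rintro ⟨i, rfl⟩
    exact ⟨i, Nat.succ_lt_succ i.isLt, rfl⟩

lemma tensorHecke_apply (i : Fin n) (f g : Fin (n + 1) → Fin m) :
    tensorHecke m i f g =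
      R0mat m (f i.castSucc, f i.succ) (g i.castSucc, g i.succ) *
        if ∀ j, j ≠ i.castSucc → j ≠ i.succ → f j = g j then 1 else 0 := by
  change R0mat m (f i.castSucc, f i.succ) (g i.castSucc, g i.succ) * _ = _
  have factor_eq (j : Fin (n + 1)) :
      (if (j : ℕ) = i ∨ (j : ℕ) = i + 1 then (1 : K) else if f j = g j then 1 else 0) =
        if j ≠ i.castSucc → j ≠ i.succ → f j = g j then 1 else 0 := by
    simp only [ne_eq, Fin.ext_iff, Fin.val_castSucc, Fin.val_succ]
    grind
  simp only [factor_eq, Fintype.prod_boole]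
  congr

lemma tensorHecke_mulVec_single (i : Fin n) (f : Fin (n + 1) → Fin m) :
    tensorHecke m i *ᵥ Pi.single f 1 =
      if f i.castSucc = f i.succ then q⁻¹ • Pi.single f 1
      else Pi.single (f ∘ swap i.castSucc i.succ) 1 +
        if f i.succ < f i.castSucc then (q⁻¹ - q) • Pi.single f 1 else 0 := by
  ext g
  rw [Matrix.mulVec_single_one, Matrix.col_apply, tensorHecke_apply, R0mat]
  simp only [ite_apply, Pi.add_apply, Pi.smul_apply, Pi.zero_apply, Pi.single_apply, smul_eq_mul,
    eq_comp_swap_iff i.castSucc i.succ,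
    eq_iff_eq_and_eq_and_forall_ne (f := g) i.castSucc i.succ, Prod.mk.injEq]
  split_ifs <;> simp_all

lemma q_ne_zero : q ≠ 0 :=
  RatFunc.X_ne_zero

/-- The standard basis vector of `V^{⊗(n+1)}` indexed by the word `f`, rescaled by `q` to the number
of inversions of `f`, so that `tensorHecke` acts by `heckeStep` also when `f` has repeated
letters. -/
def scaledVec (f : Fin (n + 1) → Fin m) : (Fin (n + 1) → Fin m) → K :=
  q ^ (inversions f).card • Pi.single f 1

lemma tensorHecke_mulVec_scaledVec (i : Fin n) (f : Fin (n + 1) → Fin m) :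
    tensorHecke m i *ᵥ scaledVec f =
      heckeStep q (f i.castSucc ≤ f i.succ) (scaledVec (f ∘ swap i.castSucc i.succ))
        (scaledVec f) := by
  have hcov := castSucc_covBy_succ i
  rw [scaledVec, Matrix.mulVec_smul, tensorHecke_mulVec_single]
  rcases lt_trichotomy (f i.castSucc) (f i.succ) with hlt | heq | hgt
  · rw [if_neg hlt.ne, if_neg hlt.not_gt, add_zero, heckeStep, if_pos hlt.le, scaledVec,
      card_inversions_comp_swap hcov hlt, pow_succ', smul_smul, inv_mul_cancel_left₀ q_ne_zero]
  · rw [if_pos heq, comp_swap_eq_self heq, ← scaledVec, heckeStep_self, scaledVec, smul_comm]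
  · have hcard := card_inversions_comp_swap (f := f ∘ swap i.castSucc i.succ) hcov (by simpa)
    rw [Function.comp_assoc, ← Perm.coe_mul, swap_mul_self, Perm.coe_one, Function.comp_id]
      at hcard
    rw [if_neg hgt.ne', if_pos hgt, heckeStep, if_neg hgt.not_ge, scaledVec, hcard,
      smul_add, smul_comm _ (q⁻¹ - q), pow_succ', mul_smul]

/-- The map from the regular module to `V^{⊗(n+1)}` which substitutes the letters `g` into a
permutation; for monotone `g` it intertwines the two Hecke actions. -/
def wordMap (g : Fin (n + 1) → Fin m) :
    (Perm (Fin (n + 1)) →₀ K) →ₗ[K] ((Fin (n + 1) → Fin m) → K) :=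
  linearCombination K fun w ↦ scaledVec (g ∘ w)

lemma wordMap_single (g : Fin (n + 1) → Fin m) (w : Perm (Fin (n + 1))) :
    wordMap g (single w 1) = scaledVec (g ∘ w) := by
  rw [wordMap, linearCombination_single, one_smul]

lemma linearIndependent_scaledVec :
    LinearIndependent K (scaledVec : (Fin (n + 1) → Fin m) → _) := by
  have h := (Pi.basisFun K (Fin (n + 1) → Fin m)).linearIndependent.units_smul
    fun f ↦ Units.mk0 (q ^ (inversions f).card) (pow_ne_zero _ q_ne_zero)
  convert h using 1
  ext1 f
  simp [scaledVec, Units.smul_def]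

lemma wordMap_injective {g : Fin (n + 1) → Fin m} (hg : Function.Injective g) :
    Function.Injective (wordMap g) :=
  linearIndependent_scaledVec.comp _ (hg.comp_left.comp DFunLike.coe_injective)

lemma scaledVec_eq_wordMap (f : Fin (n + 1) → Fin m) :
    scaledVec f = wordMap (f ∘ Tuple.sort f) (single (Tuple.sort f)⁻¹ 1) := by
  rw [wordMap_single, Function.comp_assoc, ← Perm.coe_mul, mul_inv_cancel, Perm.coe_one,
    Function.comp_id]

lemma tensorHecke_mulVec_wordMap {g : Fin (n + 1) → Fin m} (hg : Monotone g) (i : Fin n)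
    (u : Perm (Fin (n + 1)) →₀ K) :
    tensorHecke m i *ᵥ wordMap g u = wordMap g (positionHecke q i.castSucc i.succ u) := by
  suffices (tensorHecke m i).mulVecLin ∘ₗ wordMap g =
      wordMap g ∘ₗ positionHecke q i.castSucc i.succ from LinearMap.congr_fun this u
  refine Finsupp.lhom_ext' fun w ↦ LinearMap.ext_ring ?_
  change tensorHecke m i *ᵥ wordMap g (single w 1) =
    wordMap g (positionHecke q i.castSucc i.succ (single w 1))
  rw [positionHecke_single, map_heckeStep, wordMap_single, wordMap_single,
    tensorHecke_mulVec_scaledVec, Perm.coe_mul, ← Function.comp_assoc]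
  by_cases heq : g (w i.castSucc) = g (w i.succ)
  · rw [comp_swap_eq_self (f := g ∘ w) heq, heckeStep_self, heckeStep_self]
  · have hiff : g (w i.castSucc) ≤ g (w i.succ) ↔ w i.castSucc < w i.succ := by
      rw [Ne.le_iff_lt heq]
      exact ⟨hg.reflect_lt, fun h ↦ (hg h.le).lt_of_ne heq⟩
    simp only [Function.comp_apply, hiff]

variable (m n) in
/-- The action on `V^{⊗(n+1)}` of the free algebra on the Hecke generators. -/
def tensorRep :
    FreeAlgebra K (Fin n) →ₐ[K] Matrix (Fin (n + 1) → Fin m) (Fin (n + 1) → Fin m) K :=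
  FreeAlgebra.lift K (tensorHecke m)

lemma tensorRep_mulVec_wordMap {g : Fin (n + 1) → Fin m} (hg : Monotone g)
    (x : FreeAlgebra K (Fin n)) (u : Perm (Fin (n + 1)) →₀ K) :
    tensorRep m n x *ᵥ wordMap g u = wordMap g (regularRep q n x u) := by
  induction x using FreeAlgebra.induction generalizing u with
  | grade0 r =>
    rw [AlgHom.commutes, AlgHom.commutes, Algebra.algebraMap_eq_smul_one, Matrix.smul_mulVec,
      Matrix.one_mulVec, Module.algebraMap_end_apply, map_smul]
  | grade1 i =>
    rw [regularRep_ι, tensorRep, FreeAlgebra.lift_ι_apply, tensorHecke_mulVec_wordMap hg]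
  | mul x y hx hy =>
    rw [map_mul, map_mul, ← Matrix.mulVec_mulVec, hy, hx, Module.End.mul_apply]
  | add x y hx hy =>
    rw [map_add, map_add, Matrix.add_mulVec, hx, hy, LinearMap.add_apply, map_add]

lemma regularRep_eq_zero_of_tensorRep_eq_zero (hm : n + 1 ≤ m) {x : FreeAlgebra K (Fin n)}
    (hx : tensorRep m n x = 0) : regularRep q n x = 0 := by
  refine LinearMap.ext fun u ↦ wordMap_injective (Fin.castLE_injective hm) ?_
  rw [← tensorRep_mulVec_wordMap (Fin.strictMono_castLE hm).monotone, hx, Matrix.zero_mulVec,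
    LinearMap.zero_apply, map_zero]

lemma tensorRep_eq_zero_of_regularRep_eq_zero {x : FreeAlgebra K (Fin n)}
    (hx : regularRep q n x = 0) : tensorRep m n x = 0 := by
  have mulVec_scaledVec (f : Fin (n + 1) → Fin m) : tensorRep m n x *ᵥ scaledVec f = 0 := by
    rw [scaledVec_eq_wordMap, tensorRep_mulVec_wordMap (Tuple.monotone_sort f), hx,
      LinearMap.zero_apply, map_zero]
  refine Matrix.ext_of_mulVec_single fun f ↦ ?_
  have h := mulVec_scaledVec f
  rw [scaledVec, Matrix.mulVec_smul, smul_eq_zero_iff_right (pow_ne_zero _ q_ne_zero)] at h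
  rw [h, Matrix.zero_mulVec]

lemma ker_tensorRep (hm : n + 1 ≤ m) :
    LinearMap.ker (tensorRep m n).toLinearMap = LinearMap.ker (regularOrbitMap q n) := by
  rw [ker_regularOrbitMap q_ne_zero]
  exact Submodule.ext fun _ ↦ ⟨regularRep_eq_zero_of_tensorRep_eq_zero hm,
    tensorRep_eq_zero_of_regularRep_eq_zero⟩

lemma toSubmodule_adjoin_heckeGens (m n : ℕ) :
    Subalgebra.toSubmodule (Algebra.adjoin K (HeckeGens m (n + 1))) =
      LinearMap.range (tensorRep m n).toLinearMap := by
  rw [heckeGens_succ, Algebra.adjoin_range_eq_range_freeAlgebra_lift]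
  rfl

end Tensor

end HeckeAction

/-- Faithfulness of the Hecke algebra action for `m ≥ N`: the `K`-subalgebra of
`End_K(V^{⊗N})` generated by the Hecke operators `R_i` has dimension `N!` over
`K`. (The Schur–Weyl map `ℋ_N → End_{U_q(gl_m)}(V^{⊗N})` is an isomorphism for
`m ≥ N`, and `dim ℋ_N = N!`.) -/
theorem hecke_action_faithful (m N : ℕ) (hN : 1 ≤ N) (hm : N ≤ m) :
    Module.finrank K
        (Algebra.adjoin K (HeckeGens m N) : Subalgebra K
          (Matrix (Fin N → Fin m) (Fin N → Fin m) K))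
      = N.factorial := by
  obtain ⟨n, rfl⟩ := Nat.exists_eq_add_of_le' hN
  calc Module.finrank K (Subalgebra.toSubmodule (Algebra.adjoin K (HeckeGens m (n + 1))))
      = Module.finrank K (LinearMap.range (HeckeAction.tensorRep m n).toLinearMap) := by
        rw [HeckeAction.toSubmodule_adjoin_heckeGens]
    _ = Module.finrank K (LinearMap.range (HeckeAction.regularOrbitMap q n)) :=
        HeckeAction.finrank_range_eq_of_ker_eq (HeckeAction.ker_tensorRep hm)
    _ = Module.finrank K (Equiv.Perm (Fin (n + 1)) →₀ K) := by
        rw [HeckeAction.range_regularOrbitMap HeckeAction.q_ne_zero, finrank_top]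
    _ = (n + 1).factorial := by
        rw [Module.finrank_finsupp_self, Fintype.card_perm, Fintype.card_fin]
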